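/- For every integer d ≥ 1 there exists a constant C > 0 such that for every real s ≥ 1 and every finite point set P ⊂ ℝ^d with |P| = n ≥ 2, there exists an s-well-separated pair decomposition (A_1, B_1), …, (A_m, B_m) of P with m ≤ C · s^d · n which additionally satisfies Σ_{i=1}^m min(|A_i|, |B_i|) ≤ C · s^d · n · log n. -/

import Mathlib

/-!
Rescale `P` into the unit cube and put the dyadic grids on it. Two points are separated at the first
level at which the integer coordinates of their cells are more than `T` apart, for some `T` of order
`s √d`, and the pairs of cells arising in this way form the decomposition: they are well separated
because cells of level `i` have side `2⁻ⁱ`.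

A pair of cells is charged to the last cell above one of its two members whose points fall into
several children. There are at most `n` such branching cells, and each pays only for pairs of nearby
children, so there are `O(T ^ d n)` pairs.

Let `ρ` be a small multiple of the distance of `p` and `q`. The balls of radius `ρ` around `p` and
`q` are disjoint and lie in the ball of radius `16 ρ` around either point, so around one of the two
points the number of points of `P` at least doubles between the radii `ρ` and `16 ρ`. This happens
around a given point at no more than `4 log₂ n` levels. Hence in every pair of cells one side
consists of doubling points only, and the sum of the minima is at most the number of incidences of
points with pairs at their doubling levels, which is `O(T ^ d n log n)`.
-/

namespace WellSeparated

open Finset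
open scoped NNReal

section Counting

theorem card_le_mul_log_of_two_mul_le {f : ℕ → ℕ} (hf : Antitone f) (hpos : ∀ i, f i ≠ 0) {m : ℕ}
    {S : Finset ℕ} (hS : ∀ i ∈ S, 2 * f (i + m) ≤ f i) : #S ≤ m * Nat.log 2 (f 0) := by
  set g : ℕ → ℕ := fun i => Nat.log 2 (f i)
  have hg : Antitone g := fun i j hij => Nat.log_mono_right (hf hij)
  have hdrop : ∀ i, (if i ∈ S then 1 else 0) + g (m + i) ≤ g i := by
    intro i
    split_ifs with hi
    · calc 1 + g (m + i) = Nat.log 2 (f (i + m) * 2) := by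
            rw [Nat.log_mul_base one_lt_two (hpos _), add_comm, add_comm m]
        _ ≤ g i := Nat.log_mono_right (by rw [mul_comm]; exact hS i hi)
    · simpa using hg (Nat.le_add_left i m)
  obtain ⟨n, hn⟩ := S.exists_nat_subset_range
  have htotal : #S + ∑ i ∈ range n, g (m + i) ≤
      ∑ i ∈ range m, g i + ∑ i ∈ range n, g (m + i) :=
    calc #S + ∑ i ∈ range n, g (m + i)
        = ∑ i ∈ range n, ((if i ∈ S then 1 else 0) + g (m + i)) := by
          rw [sum_add_distrib, sum_boole, filter_mem_eq_inter, inter_eq_right.mpr hn, Nat.cast_id]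
      _ ≤ ∑ i ∈ range n, g i := sum_le_sum fun i _ => hdrop i
      _ ≤ ∑ i ∈ range (m + n), g i :=
          sum_le_sum_of_subset (range_subset_range.mpr (Nat.le_add_left n m))
      _ = _ := sum_range_add g m n
  calc #S ≤ ∑ i ∈ range m, g i := Nat.le_of_add_le_add_right htotal
    _ ≤ ∑ _i ∈ range m, g 0 := sum_le_sum fun i _ => hg (Nat.zero_le i)
    _ = m * Nat.log 2 (f 0) := by simp [g]

theorem card_le_of_forall_dist_le {ι : Type*} [Fintype ι] {S : Finset (ι → ℤ)} {a : ι → ℤ} {r : ℕ}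
    (h : ∀ v ∈ S, dist v a ≤ r) : #S ≤ (2 * r + 1) ^ Fintype.card ι := by
  classical
  calc #S ≤ #(Fintype.piFinset fun k => Icc (a k - r) (a k + r)) := by
        refine card_le_card fun v hv => Fintype.mem_piFinset.mpr fun k => ?_
        have hk : |v k - a k| ≤ r := by
          have := (dist_le_pi_dist v a k).trans (h v hv)
          rw [Int.dist_eq] at this
          exact_mod_cast this
        rw [abs_le] at hk
        exact mem_Icc.mpr ⟨by lia, by lia⟩
    _ = (2 * r + 1) ^ Fintype.card ι := by
        simp only [Fintype.card_piFinset, Int.card_Icc]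
        rw [← card_univ, ← prod_const]
        exact prod_congr rfl fun k _ => by lia

open Classical in
/-- The number of points of `P` that `y` maps into the open ball of radius `r` around `u`. -/
noncomputable def ballCard {α X : Type*} [PseudoMetricSpace X] (y : α → X) (P : Finset α)
    (r : ℝ) (u : X) : ℕ := #{x ∈ P | y x ∈ Metric.ball u r}

variable {α X : Type*} [PseudoMetricSpace X] {y : α → X} {P : Finset α}

theorem ballCard_mono {u : X} {r r' : ℝ} (h : r ≤ r') : ballCard y P r u ≤ ballCard y P r' u := by
  classical
  exact card_le_card (monotone_filter_right P fun _ _ hx => Metric.ball_subset_ball h hx)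

theorem ballCard_ne_zero {p : α} (hp : p ∈ P) {r : ℝ} (hr : 0 < r) :
    ballCard y P r (y p) ≠ 0 := by
  classical
  exact card_ne_zero_of_mem (mem_filter.mpr ⟨hp, Metric.mem_ball_self hr⟩)

theorem ballCard_le_card (u : X) (r : ℝ) : ballCard y P r u ≤ #P := by
  classical
  exact card_filter_le _ _

theorem ballCard_add_ballCard_le {u v : X} {ρ r : ℝ} (hρ : 2 * ρ ≤ dist u v)
    (hr : ρ + dist u v ≤ r) : ballCard y P ρ u + ballCard y P ρ v ≤ ballCard y P r u := by
  classical
  have hdisj : Disjoint (Metric.ball u ρ) (Metric.ball v ρ) :=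
    Metric.ball_disjoint_ball (by linarith)
  have hu : Metric.ball u ρ ⊆ Metric.ball u r :=
    Metric.ball_subset_ball (by linarith [dist_nonneg (x := u) (y := v)])
  have hv : Metric.ball v ρ ⊆ Metric.ball u r := Metric.ball_subset_ball' (by rwa [dist_comm])
  unfold ballCard
  rw [← card_union_of_disjoint
    (disjoint_filter.mpr fun x _ hxu hxv => Set.disjoint_left.mp hdisj hxu hxv), ← filter_or]
  exact card_le_card (monotone_filter_right P fun x _ hx => hx.elim (@hu _) (@hv _))

theorem two_mul_ballCard_le_or {u v : X} {ρ r : ℝ} (hρ : 2 * ρ ≤ dist u v)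
    (hr : ρ + dist u v ≤ r) :
    2 * ballCard y P ρ u ≤ ballCard y P r u ∨ 2 * ballCard y P ρ v ≤ ballCard y P r v := by
  have hu := ballCard_add_ballCard_le (y := y) (P := P) hρ hr
  have hv := ballCard_add_ballCard_le (y := y) (P := P) (u := v) (v := u) (r := r)
    (by rwa [dist_comm]) (by rwa [dist_comm])
  lia

end Counting

section NestedPartition

variable {α β : Type*}

/-- A nested sequence of partitions of `α`, encoded by labels: `c i x` names the block of level `i`
that contains `x`, and the partition of level `i + 1` refines the one of level `i`. -/
def IsNested (c : ℕ → α → β) : Prop := ∀ i x z, c (i + 1) x = c (i + 1) z → c i x = c i z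

theorem IsNested.eq_of_le {c : ℕ → α → β} (hc : IsNested c) {i j : ℕ} (hij : i ≤ j) {x z : α}
    (h : c j x = c j z) : c i x = c i z := by
  induction j, hij using Nat.le_induction with
  | base => exact h
  | succ j _ ih => exact ih (hc j x z h)

/-- The block with label `b` at level `i` contains points of `P` from at least two different blocks
of level `i + 1`: it is a branching node of the tree of blocks, and the branching nodes are the
internal nodes of the compressed tree. -/
def IsBranching (c : ℕ → α → β) (P : Finset α) (i : ℕ) (b : β) : Prop :=
  ∃ x ∈ P, ∃ z ∈ P, c i x = b ∧ c i z = b ∧ c (i + 1) x ≠ c (i + 1) z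

open Classical in
/-- The points of `P` in the block with label `b` at level `i`. -/
noncomputable def block (c : ℕ → α → β) (P : Finset α) (i : ℕ) (b : β) : Finset α :=
  {x ∈ P | c i x = b}

variable {c : ℕ → α → β} {P : Finset α}

theorem mem_block {i : ℕ} {b : β} {x : α} : x ∈ block c P i b ↔ x ∈ P ∧ c i x = b := by
  simp [block]

theorem eq_succ_of_not_isBranching {i : ℕ} {x z : α} (hx : x ∈ P) (hz : z ∈ P)
    (hb : ¬ IsBranching c P i (c i x)) (h : c i z = c i x) : c (i + 1) z = c (i + 1) x := by
  by_contra hne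
  exact hb ⟨z, hz, x, hx, h, rfl, hne⟩

/-- Inserting a point `x` creates at most one branching block, because `x` is separated in it from
all the other points. -/
theorem IsNested.apply_ne_of_isBranching_insert [DecidableEq α] (hc : IsNested c) {x : α} {i : ℕ}
    {b : β} (h : IsBranching c (insert x P) i b) (h' : ¬ IsBranching c P i b) :
    c i x = b ∧ (∃ z ∈ P, c i z = b) ∧ ∀ w ∈ P, c (i + 1) w ≠ c (i + 1) x := by
  obtain ⟨z, hz, hxb, hzb, hne⟩ : ∃ z ∈ P, c i x = b ∧ c i z = b ∧ c (i + 1) z ≠ c (i + 1) x := by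
    obtain ⟨u, hu, v, hv, hub, hvb, hne⟩ := h
    rcases mem_insert.mp hu with rfl | huP <;> rcases mem_insert.mp hv with rfl | hvP
    · exact absurd rfl hne
    · exact ⟨v, hvP, hub, hvb, hne.symm⟩
    · exact ⟨u, huP, hvb, hub, hne⟩
    · exact absurd ⟨u, huP, v, hvP, hub, hvb, hne⟩ h'
  exact ⟨hxb, ⟨z, hz, hzb⟩, fun w hw hwx =>
    h' ⟨z, hz, w, hw, hzb, (hc i w x hwx).trans hxb, fun hzw => hne (hzw.trans hwx)⟩⟩

theorem IsNested.card_le_of_forall_isBranching (hc : IsNested c) {S : Finset (ℕ × β)}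
    (hS : ∀ t ∈ S, IsBranching c P t.1 t.2) : #S ≤ #P := by
  classical
  induction P using Finset.induction_on generalizing S with
  | empty =>
    have hempty : S = ∅ :=
      eq_empty_of_forall_notMem fun t ht => by simpa [IsBranching] using hS t ht
    simp [hempty]
  | insert x P hx ih =>
    have hold : #{t ∈ S | IsBranching c P t.1 t.2} ≤ #P := ih fun t ht => (mem_filter.mp ht).2
    have hnew : #{t ∈ S | ¬ IsBranching c P t.1 t.2} ≤ 1 := by
      have hspec : ∀ t ∈ S.filter fun t => ¬ IsBranching c P t.1 t.2, c t.1 x = t.2 ∧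
          (∃ z ∈ P, c t.1 z = t.2) ∧ ∀ w ∈ P, c (t.1 + 1) w ≠ c (t.1 + 1) x := fun t ht =>
        hc.apply_ne_of_isBranching_insert (hS t (mem_filter.mp ht).1) (mem_filter.mp ht).2
      have hle : ∀ t ∈ S.filter fun t => ¬ IsBranching c P t.1 t.2,
          ∀ t' ∈ S.filter fun t => ¬ IsBranching c P t.1 t.2, t'.1 ≤ t.1 := by
        intro t ht t' ht'
        by_contra! hlt
        obtain ⟨hx', ⟨z, hz, hzb⟩, -⟩ := hspec t' ht'
        exact (hspec t ht).2.2 z hz (hc.eq_of_le hlt (hzb.trans hx'.symm))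
      refine card_le_one.mpr fun t ht t' ht' => ?_
      have hlevel : t.1 = t'.1 := le_antisymm (hle t' ht' t ht) (hle t ht t' ht')
      exact Prod.ext hlevel (by rw [← (hspec t ht).1, ← (hspec t' ht').1, hlevel])
    calc #S = #{t ∈ S | IsBranching c P t.1 t.2} + #{t ∈ S | ¬ IsBranching c P t.1 t.2} :=
          (card_filter_add_card_filter_not _).symm
      _ ≤ #P + 1 := add_le_add hold hnew
      _ = #(insert x P) := (card_insert_of_notMem hx).symm

theorem exists_isBranching_of_ne (hroot : ∀ p ∈ P, ∀ q ∈ P, c 0 p = c 0 q) {p q : α}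
    (hp : p ∈ P) (hq : q ∈ P) {l : ℕ} (hne : c l p ≠ c l q) :
    ∃ j < l, (IsBranching c P j (c j p) ∨ IsBranching c P j (c j q)) ∧
      (∀ z ∈ P, c (j + 1) z = c (j + 1) p → c l z = c l p) ∧
      ∀ z ∈ P, c (j + 1) z = c (j + 1) q → c l z = c l q := by
  induction l with
  | zero => exact absurd (hroot p hp q hq) hne
  | succ l ih =>
    by_cases hb : IsBranching c P l (c l p) ∨ IsBranching c P l (c l q)
    · exact ⟨l, l.lt_succ_self, hb, fun _ _ h => h, fun _ _ h => h⟩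
    · obtain ⟨hbp, hbq⟩ := not_or.mp hb
      obtain ⟨j, hj, hbj, hpj, hqj⟩ := ih fun h => hne (eq_succ_of_not_isBranching hq hp hbq h)
      exact ⟨j, hj.trans l.lt_succ_self, hbj,
        fun z hz h => eq_succ_of_not_isBranching hp hz hbp (hpj z hz h),
        fun z hz h => eq_succ_of_not_isBranching hq hz hbq (hqj z hz h)⟩

end NestedPartition

section SeparationLevel

variable {α β : Type*} [PseudoMetricSpace β]

/-- The first level at which the labels of `p` and `q` are more than `T` apart; it is the junk value
`0` if there is none. -/
noncomputable def sepLevel (T : ℝ) (c : ℕ → α → β) (p q : α) : ℕ :=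
  sInf {i | T < dist (c i p) (c i q)}

/-- The index of the pair of blocks in which `p` and `q` are separated: its level and the labels of
the blocks of `p` and of `q`. -/
noncomputable def sepPair (T : ℝ) (c : ℕ → α → β) (p q : α) : ℕ × β × β :=
  (sepLevel T c p q, c (sepLevel T c p q) p, c (sepLevel T c p q) q)

open Classical in
/-- The pairs of blocks in which the ordered pairs of distinct points of `P` are separated. -/
noncomputable def sepPairs (T : ℝ) (c : ℕ → α → β) (P : Finset α) : Finset (ℕ × β × β) :=
  P.offDiag.image fun z => sepPair T c z.1 z.2

open Classical in
/-- One orientation of each pair of blocks in `sepPairs T c P`. -/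
noncomputable def orientedSepPairs (T : ℝ) (c : ℕ → α → β) (P : Finset α) :
    Finset (ℕ × β × β) :=
  {t ∈ sepPairs T c P | WellOrderingRel t.2.1 t.2.2}

open Classical in
/-- The labels of level `i + 1` of the points of `P` whose label of level `i` is within distance `r`
of `b`. -/
noncomputable def nearChildren (c : ℕ → α → β) (P : Finset α) (r : ℝ) (i : ℕ) (b : β) : Finset β :=
  {q ∈ P | dist (c i q) b ≤ r}.image (c (i + 1))

variable {T : ℝ} {c : ℕ → α → β} {P : Finset α}

theorem mem_sepPairs {t : ℕ × β × β} :
    t ∈ sepPairs T c P ↔ ∃ p ∈ P, ∃ q ∈ P, p ≠ q ∧ sepPair T c p q = t := by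
  simp [sepPairs, and_assoc]

theorem mem_orientedSepPairs {t : ℕ × β × β} :
    t ∈ orientedSepPairs T c P ↔ t ∈ sepPairs T c P ∧ WellOrderingRel t.2.1 t.2.2 := by
  simp [orientedSepPairs]

theorem mem_nearChildren {r : ℝ} {i : ℕ} {b e : β} :
    e ∈ nearChildren c P r i b ↔ ∃ q ∈ P, dist (c i q) b ≤ r ∧ c (i + 1) q = e := by
  simp [nearChildren, and_assoc]

theorem sepLevel_comm (p q : α) : sepLevel T c p q = sepLevel T c q p := by
  simp only [sepLevel, dist_comm]

theorem sepPair_swap (p q : α) : Prod.map id Prod.swap (sepPair T c p q) = sepPair T c q p := by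
  simp [sepPair, sepLevel_comm p q]

theorem swap_mem_sepPairs {t : ℕ × β × β} (ht : t ∈ sepPairs T c P) :
    Prod.map id Prod.swap t ∈ sepPairs T c P := by
  obtain ⟨p, hp, q, hq, hne, rfl⟩ := mem_sepPairs.mp ht
  exact mem_sepPairs.mpr ⟨q, hq, p, hp, hne.symm, (sepPair_swap p q).symm⟩

theorem lt_dist_sepLevel {p q : α} (h : ∃ i, T < dist (c i p) (c i q)) :
    T < dist (c (sepLevel T c p q) p) (c (sepLevel T c p q) q) :=
  Nat.sInf_mem h

theorem dist_le_of_lt_sepLevel {p q : α} {i : ℕ} (hi : i < sepLevel T c p q) :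
    dist (c i p) (c i q) ≤ T :=
  not_lt.mp (Nat.notMem_of_lt_sInf hi)

theorem IsNested.sepLevel_congr (hc : IsNested c) {p q p' q' : α}
    (h : ∃ i, T < dist (c i p) (c i q))
    (hp : c (sepLevel T c p q) p' = c (sepLevel T c p q) p)
    (hq : c (sepLevel T c p q) q' = c (sepLevel T c p q) q) :
    sepLevel T c p' q' = sepLevel T c p q := by
  have hsep' : T < dist (c (sepLevel T c p q) p') (c (sepLevel T c p q) q') := by
    rw [hp, hq]
    exact lt_dist_sepLevel h
  refine le_antisymm (Nat.sInf_le hsep') (le_csInf ⟨_, hsep'⟩ fun i hi => ?_)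
  by_contra! hlt
  rw [Set.mem_ofPred_eq, hc.eq_of_le hlt.le hp, hc.eq_of_le hlt.le hq] at hi
  exact (dist_le_of_lt_sepLevel hlt).not_gt hi

theorem IsNested.sepPair_congr (hc : IsNested c) {p q p' q' : α}
    (h : ∃ i, T < dist (c i p) (c i q))
    (hp : c (sepLevel T c p q) p' = c (sepLevel T c p q) p)
    (hq : c (sepLevel T c p q) q' = c (sepLevel T c p q) q) :
    sepPair T c p' q' = sepPair T c p q := by
  simp only [sepPair, hc.sepLevel_congr h hp hq, hp, hq]

/-- The nested partitions `c` form a tree whose root contains all of `P` and whose levels eventually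
move the labels of any two points of `P` more than `T` apart. -/
structure IsSeparatingTree (T : ℝ) (c : ℕ → α → β) (P : Finset α) : Prop where
  isNested : IsNested c
  root_eq : ∀ p ∈ P, ∀ q ∈ P, c 0 p = c 0 q
  exists_lt_dist : ∀ p ∈ P, ∀ q ∈ P, p ≠ q → ∃ i, T < dist (c i p) (c i q)

namespace IsSeparatingTree

theorem apply_sepLevel_ne (h : IsSeparatingTree T c P) (hT : 0 ≤ T) {p q : α} (hp : p ∈ P)
    (hq : q ∈ P) (hne : p ≠ q) : c (sepLevel T c p q) p ≠ c (sepLevel T c p q) q := fun heq =>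
  (lt_dist_sepLevel (h.exists_lt_dist p hp q hq hne)).not_ge (by rwa [heq, dist_self])

theorem sepLevel_ne_zero (h : IsSeparatingTree T c P) (hT : 0 ≤ T) {p q : α} (hp : p ∈ P)
    (hq : q ∈ P) (hne : p ≠ q) : sepLevel T c p q ≠ 0 := fun hzero =>
  h.apply_sepLevel_ne hT hp hq hne (by rw [hzero]; exact h.root_eq p hp q hq)

theorem lt_dist_of_mem_sepPairs (h : IsSeparatingTree T c P) {t : ℕ × β × β}
    (ht : t ∈ sepPairs T c P) : T < dist t.2.1 t.2.2 := by
  obtain ⟨p, hp, q, hq, hne, rfl⟩ := mem_sepPairs.mp ht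
  exact lt_dist_sepLevel (h.exists_lt_dist p hp q hq hne)

theorem sepPair_eq_of_mem_block (h : IsSeparatingTree T c P) {t : ℕ × β × β}
    (ht : t ∈ sepPairs T c P) {p q : α} (hp : p ∈ block c P t.1 t.2.1)
    (hq : q ∈ block c P t.1 t.2.2) : sepPair T c p q = t := by
  obtain ⟨p₀, hp₀, q₀, hq₀, hne, rfl⟩ := mem_sepPairs.mp ht
  exact h.isNested.sepPair_congr (h.exists_lt_dist p₀ hp₀ q₀ hq₀ hne) (mem_block.mp hp).2
    (mem_block.mp hq).2

theorem existsUnique_mem_orientedSepPairs (h : IsSeparatingTree T c P) (hT : 0 ≤ T) {p q : α}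
    (hp : p ∈ P) (hq : q ∈ P) (hne : p ≠ q) :
    ∃! t : orientedSepPairs T c P,
      (p ∈ block c P t.1.1 t.1.2.1 ∧ q ∈ block c P t.1.1 t.1.2.2) ∨
        (q ∈ block c P t.1.1 t.1.2.1 ∧ p ∈ block c P t.1.1 t.1.2.2) := by
  wlog hlt : WellOrderingRel (c (sepLevel T c p q) p) (c (sepLevel T c p q) q) generalizing p q
  · have hgt := ((trichotomous_of WellOrderingRel _ _).resolve_left hlt).resolve_left
      (h.apply_sepLevel_ne hT hp hq hne)
    rw [sepLevel_comm] at hgt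
    simpa only [or_comm] using this hq hp hne.symm hgt
  have hmem : sepPair T c p q ∈ orientedSepPairs T c P :=
    mem_orientedSepPairs.mpr ⟨mem_sepPairs.mpr ⟨p, hp, q, hq, hne, rfl⟩, hlt⟩
  refine ⟨⟨sepPair T c p q, hmem⟩,
    Or.inl ⟨mem_block.mpr ⟨hp, rfl⟩, mem_block.mpr ⟨hq, rfl⟩⟩, ?_⟩
  rintro ⟨t, ht⟩ (⟨hpt, hqt⟩ | ⟨hqt, hpt⟩)
  · exact Subtype.ext (h.sepPair_eq_of_mem_block (mem_orientedSepPairs.mp ht).1 hpt hqt).symm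
  · have hgt := (mem_orientedSepPairs.mp ht).2
    rw [← h.sepPair_eq_of_mem_block (mem_orientedSepPairs.mp ht).1 hqt hpt, ← sepPair_swap] at hgt
    exact absurd hgt (asymm hlt)

end IsSeparatingTree

/-- The separated pair of `p` and `q` is charged to the block of `p` at level `j`: this block is
branching, and below level `j` the blocks of `p` and `q` do not branch before the separation. -/
def IsChargedAt (T : ℝ) (c : ℕ → α → β) (P : Finset α) (p q : α) (j : ℕ) : Prop :=
  j < sepLevel T c p q ∧ IsBranching c P j (c j p) ∧
    (∀ z ∈ P, c (j + 1) z = c (j + 1) p → c (sepLevel T c p q) z = c (sepLevel T c p q) p) ∧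
    ∀ z ∈ P, c (j + 1) z = c (j + 1) q → c (sepLevel T c p q) z = c (sepLevel T c p q) q

namespace IsSeparatingTree

theorem exists_isChargedAt (h : IsSeparatingTree T c P) (hT : 0 ≤ T) {p q : α} (hp : p ∈ P)
    (hq : q ∈ P) (hne : p ≠ q) : ∃ j, IsChargedAt T c P p q j ∨ IsChargedAt T c P q p j := by
  obtain ⟨j, hj, hb | hb, hpj, hqj⟩ :=
    exists_isBranching_of_ne h.root_eq hp hq (h.apply_sepLevel_ne hT hp hq hne)
  · exact ⟨j, Or.inl ⟨hj, hb, hpj, hqj⟩⟩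
  · rw [sepLevel_comm] at hj hpj hqj
    exact ⟨j, Or.inr ⟨hj, hb, hqj, hpj⟩⟩

theorem card_le_of_forall_isChargedAt (h : IsSeparatingTree T c P) {M N : ℕ}
    (hM : ∀ i b, #(nearChildren c P 0 i b) ≤ M) (hN : ∀ i b, #(nearChildren c P T i b) ≤ N)
    {F : Finset (ℕ × β × β)}
    (hF : ∀ t ∈ F, ∃ p ∈ P, ∃ q ∈ P, p ≠ q ∧ sepPair T c p q = t ∧ ∃ j, IsChargedAt T c P p q j) :
    #F ≤ M * N * #P := by
  classical
  rcases F.eq_empty_or_nonempty with rfl | ⟨t₀, ht₀⟩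
  · simp
  have : Nonempty α := ⟨(hF t₀ ht₀).choose⟩
  choose! p hp q hq hne hpq j hj using hF
  have hbranch : #(F.image fun t => (j t, c (j t) (p t))) ≤ #P :=
    h.isNested.card_le_of_forall_isBranching
      (forall_mem_image.mpr fun t ht => (hj t ht).2.1)
  refine (card_le_mul_card_image F (M * N) fun u _ => ?_).trans (Nat.mul_le_mul_left _ hbranch)
  calc _ ≤ #(nearChildren c P 0 u.1 u.2 ×ˢ nearChildren c P T u.1 u.2) := by
        refine card_le_card_of_injOn (fun t => (c (j t + 1) (p t), c (j t + 1) (q t))) ?_ ?_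
        · intro t ht
          obtain ⟨htF, rfl⟩ := mem_filter.mp ht
          refine mem_product.mpr ⟨mem_nearChildren.mpr ⟨p t, hp t htF, (dist_self _).le, rfl⟩,
            mem_nearChildren.mpr ⟨q t, hq t htF, ?_, rfl⟩⟩
          rw [dist_comm]
          exact dist_le_of_lt_sepLevel (hj t htF).1
        · intro t ht t' ht' heq
          obtain ⟨htF, rfl⟩ := mem_filter.mp ht
          obtain ⟨htF', heq'⟩ := mem_filter.mp ht'
          obtain ⟨hp', hq'⟩ := Prod.mk.inj heq
          rw [(Prod.mk.inj heq').1] at hp' hq'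
          obtain ⟨-, -, hpt, hqt⟩ := hj t htF
          rw [← hpq t htF, ← hpq t' htF']
          exact (h.isNested.sepPair_congr
            (h.exists_lt_dist _ (hp t htF) _ (hq t htF) (hne t htF))
            (hpt _ (hp t' htF') hp'.symm) (hqt _ (hq t' htF') hq'.symm)).symm
    _ ≤ M * N := by
        rw [card_product]
        exact Nat.mul_le_mul (hM _ _) (hN _ _)

/-- Each pair is charged to the last branching block above it; the charge is recovered from the
children of that block. -/
theorem card_sepPairs_le (h : IsSeparatingTree T c P) (hT : 0 ≤ T) {M N : ℕ}
    (hM : ∀ i b, #(nearChildren c P 0 i b) ≤ M) (hN : ∀ i b, #(nearChildren c P T i b) ≤ N) :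
    #(sepPairs T c P) ≤ 2 * (M * N * #P) := by
  classical
  set F := {t ∈ sepPairs T c P |
    ∃ p ∈ P, ∃ q ∈ P, p ≠ q ∧ sepPair T c p q = t ∧ ∃ j, IsChargedAt T c P p q j}
  have hF : #F ≤ M * N * #P :=
    h.card_le_of_forall_isChargedAt hM hN fun t ht => (mem_filter.mp ht).2
  have hcover : sepPairs T c P ⊆ F ∪ F.image (Prod.map id Prod.swap) := by
    intro t ht
    obtain ⟨p, hp, q, hq, hne, rfl⟩ := mem_sepPairs.mp ht
    obtain ⟨j, hj | hj⟩ := h.exists_isChargedAt hT hp hq hne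
    · exact mem_union_left _ (mem_filter.mpr ⟨ht, p, hp, q, hq, hne, rfl, j, hj⟩)
    · refine mem_union_right _ (mem_image.mpr ⟨sepPair T c q p, ?_, sepPair_swap q p⟩)
      exact mem_filter.mpr ⟨mem_sepPairs.mpr ⟨q, hq, p, hp, hne.symm, rfl⟩,
        q, hq, p, hp, hne.symm, rfl, j, hj⟩
  calc #(sepPairs T c P) ≤ #F + #(F.image (Prod.map id Prod.swap)) :=
        (card_le_card hcover).trans (card_union_le _ _)
    _ ≤ 2 * (M * N * #P) := by linarith [card_image_le (s := F) (f := Prod.map id Prod.swap)]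

variable {bad : ℕ → α → Prop}

theorem card_filter_bad_le (h : IsSeparatingTree T c P) (hT : 0 ≤ T) {L N : ℕ} {p : α}
    (hL : ∀ S : Finset ℕ, (∀ i ∈ S, bad i p) → #S ≤ L)
    (hN : ∀ i b, #(nearChildren c P T i b) ≤ N) {F : Finset (ℕ × β × β)}
    (hF : ∀ t ∈ F, t ∈ sepPairs T c P ∧ c t.1 p = t.2.1 ∧ bad t.1 p) : #F ≤ N * L := by
  classical
  have hlevels : #(F.image Prod.fst) ≤ L := hL _ (forall_mem_image.mpr fun t ht => (hF t ht).2.2)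
  refine (card_le_mul_card_image F N fun i _ => ?_).trans (Nat.mul_le_mul_left N hlevels)
  refine (card_le_card_of_injOn (t := nearChildren c P T (i - 1) (c (i - 1) p))
    (fun t => t.2.2) ?_ ?_).trans (hN _ _)
  · intro t ht
    obtain ⟨htF, rfl⟩ := mem_filter.mp ht
    obtain ⟨hpairs, hpt, -⟩ := hF t htF
    obtain ⟨p₀, hp₀, q₀, hq₀, hne, rfl⟩ := mem_sepPairs.mp hpairs
    obtain ⟨i, hi⟩ := Nat.exists_eq_succ_of_ne_zero (h.sepLevel_ne_zero hT hp₀ hq₀ hne)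
    simp only [sepPair, hi, Nat.succ_eq_add_one, Nat.add_sub_cancel] at hpt ⊢
    refine mem_nearChildren.mpr ⟨q₀, hq₀, ?_, rfl⟩
    rw [dist_comm, h.isNested i _ _ hpt]
    exact dist_le_of_lt_sepLevel (hi ▸ i.lt_succ_self)
  · intro t ht t' ht' heq
    obtain ⟨htF, rfl⟩ := mem_filter.mp ht
    obtain ⟨htF', heq'⟩ := mem_filter.mp ht'
    refine Prod.ext heq'.symm (Prod.ext ?_ heq)
    rw [← (hF t htF).2.1, ← (hF t' htF').2.1, heq']

/-- If some point of one block is not bad, then every point of the other block is. -/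
theorem min_card_block_le [∀ i, DecidablePred (bad i)] (h : IsSeparatingTree T c P) (hT : 0 ≤ T)
    (hbad : ∀ p ∈ P, ∀ q ∈ P, p ≠ q → bad (sepLevel T c p q) p ∨ bad (sepLevel T c p q) q)
    {t : ℕ × β × β} (ht : t ∈ sepPairs T c P) :
    min #(block c P t.1 t.2.1) #(block c P t.1 t.2.2) ≤
      #{p ∈ block c P t.1 t.2.1 | bad t.1 p} + #{q ∈ block c P t.1 t.2.2 | bad t.1 q} := by
  by_cases hall : ∀ p ∈ block c P t.1 t.2.1, bad t.1 p
  · rw [filter_true_of_mem hall]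
    exact (min_le_left _ _).trans (Nat.le_add_right _ _)
  · push Not at hall
    obtain ⟨p, hp, hpbad⟩ := hall
    have hall' : ∀ q ∈ block c P t.1 t.2.2, bad t.1 q := by
      intro q hq
      have hpq := h.sepPair_eq_of_mem_block ht hp hq
      have hlevel : sepLevel T c p q = t.1 := congrArg Prod.fst hpq
      rw [← hlevel] at hpbad ⊢
      refine (hbad p (mem_block.mp hp).1 q (mem_block.mp hq).1 ?_).resolve_left hpbad
      rintro rfl
      refine (h.lt_dist_of_mem_sepPairs ht).not_ge ?_
      rwa [← (mem_block.mp hp).2, ← (mem_block.mp hq).2, dist_self]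
    rw [filter_true_of_mem hall']
    exact (min_le_right _ _).trans (Nat.le_add_left _ _)

theorem sum_card_filter_block_le [∀ i, DecidablePred (bad i)] (h : IsSeparatingTree T c P)
    (hT : 0 ≤ T) {L N : ℕ} (hL : ∀ p ∈ P, ∀ S : Finset ℕ, (∀ i ∈ S, bad i p) → #S ≤ L)
    (hN : ∀ i b, #(nearChildren c P T i b) ≤ N) :
    ∑ t ∈ sepPairs T c P, #{p ∈ block c P t.1 t.2.1 | bad t.1 p} ≤ #P * (N * L) := by
  classical
  calc ∑ t ∈ sepPairs T c P, #{p ∈ block c P t.1 t.2.1 | bad t.1 p}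
      = ∑ t ∈ sepPairs T c P, #{p ∈ P | c t.1 p = t.2.1 ∧ bad t.1 p} := by
        simp only [block, filter_filter]
    _ = ∑ p ∈ P, #{t ∈ sepPairs T c P | c t.1 p = t.2.1 ∧ bad t.1 p} :=
        sum_card_bipartiteAbove_eq_sum_card_bipartiteBelow
          (fun (t : ℕ × β × β) p => c t.1 p = t.2.1 ∧ bad t.1 p)
    _ ≤ #P * (N * L) := by
        refine sum_le_card_nsmul _ _ _ fun p hp => ?_
        exact h.card_filter_bad_le hT (hL p hp) hN fun t ht => mem_filter.mp ht

theorem sum_min_card_block_le (h : IsSeparatingTree T c P) (hT : 0 ≤ T) {L N : ℕ}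
    (hbad : ∀ p ∈ P, ∀ q ∈ P, p ≠ q → bad (sepLevel T c p q) p ∨ bad (sepLevel T c p q) q)
    (hL : ∀ p ∈ P, ∀ S : Finset ℕ, (∀ i ∈ S, bad i p) → #S ≤ L)
    (hN : ∀ i b, #(nearChildren c P T i b) ≤ N) :
    ∑ t ∈ sepPairs T c P, min #(block c P t.1 t.2.1) #(block c P t.1 t.2.2) ≤
      2 * (#P * (N * L)) := by
  classical
  have hswap : ∑ t ∈ sepPairs T c P, #{q ∈ block c P t.1 t.2.2 | bad t.1 q} =
      ∑ t ∈ sepPairs T c P, #{p ∈ block c P t.1 t.2.1 | bad t.1 p} :=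
    sum_nbij' (Prod.map id Prod.swap) (Prod.map id Prod.swap) (fun _ => swap_mem_sepPairs)
      (fun _ => swap_mem_sepPairs) (fun _ _ => rfl) (fun _ _ => rfl) fun _ _ => rfl
  calc ∑ t ∈ sepPairs T c P, min #(block c P t.1 t.2.1) #(block c P t.1 t.2.2)
      ≤ ∑ t ∈ sepPairs T c P, (#{p ∈ block c P t.1 t.2.1 | bad t.1 p} +
          #{q ∈ block c P t.1 t.2.2 | bad t.1 q}) :=
        sum_le_sum fun t ht => h.min_card_block_le hT hbad ht
    _ = 2 * ∑ t ∈ sepPairs T c P, #{p ∈ block c P t.1 t.2.1 | bad t.1 p} := by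
        rw [sum_add_distrib, hswap, two_mul]
    _ ≤ 2 * (#P * (N * L)) :=
        Nat.mul_le_mul_left 2 (h.sum_card_filter_block_le hT hL hN)

end IsSeparatingTree

end SeparationLevel

section DyadicCell

variable {α ι : Type*}

/-- The integer coordinates of the cell of side `2⁻ⁱ` of the dyadic grid that contains `v`. -/
noncomputable def dyadicCell (i : ℕ) (v : ι → ℝ) : ι → ℤ := fun k => ⌊2 ^ i * v k⌋

theorem dyadicCell_eq_succ_ediv_two (i : ℕ) (v : ι → ℝ) (k : ι) :
    dyadicCell i v k = dyadicCell (i + 1) v k / 2 := by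
  have h := Int.floor_div_natCast (2 ^ (i + 1) * v k : ℝ) 2
  rw [pow_succ, mul_right_comm, Nat.cast_ofNat, mul_div_cancel_right₀ _ two_ne_zero] at h
  rw [dyadicCell, dyadicCell, h, pow_succ, mul_right_comm, Nat.cast_ofNat]

/-- The dyadic quadtree of the points `y x`: the label of `x` at level `i` is its cell of side
`2⁻ⁱ`. -/
noncomputable def dyadicTree (y : α → ι → ℝ) (i : ℕ) (x : α) : ι → ℤ := dyadicCell i (y x)

theorem isNested_dyadicTree (y : α → ι → ℝ) : IsNested (dyadicTree y) := by
  intro i x z h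
  funext k
  calc dyadicCell i (y x) k = dyadicCell (i + 1) (y x) k / 2 := dyadicCell_eq_succ_ediv_two i _ k
    _ = dyadicCell (i + 1) (y z) k / 2 := congrArg (· k / 2) h
    _ = dyadicCell i (y z) k := (dyadicCell_eq_succ_ediv_two i _ k).symm

theorem dyadicCell_zero_eq_zero {v : ι → ℝ} (hv : ∀ k, v k ∈ Set.Ico (0 : ℝ) 1) :
    dyadicCell 0 v = 0 := by
  funext k
  simpa [dyadicCell, Int.floor_eq_zero_iff] using hv k

theorem abs_dist_dyadicCell_apply_sub_lt_one (i : ℕ) (u v : ι → ℝ) (k : ι) :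
    |dist (dyadicCell i u k) (dyadicCell i v k) - 2 ^ i * dist (u k) (v k)| < 1 := by
  have hscale : 2 ^ i * dist (u k) (v k) = |2 ^ i * u k - 2 ^ i * v k| := by
    rw [← mul_sub, abs_mul, abs_of_pos (by positivity), Real.dist_eq]
  rw [hscale, Int.dist_eq]
  refine (abs_abs_sub_abs_le _ _).trans_lt ?_
  simp only [dyadicCell, abs_lt]
  constructor <;> linarith [Int.floor_le (2 ^ i * u k), Int.lt_floor_add_one (2 ^ i * u k),
    Int.floor_le (2 ^ i * v k), Int.lt_floor_add_one (2 ^ i * v k)]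

variable [Fintype ι]

theorem dist_dyadicCell_lt (i : ℕ) (u v : ι → ℝ) :
    dist (dyadicCell i u) (dyadicCell i v) < 2 ^ i * dist u v + 1 := by
  refine (dist_pi_lt_iff (by positivity)).mpr fun k => ?_
  calc dist (dyadicCell i u k) (dyadicCell i v k) < 2 ^ i * dist (u k) (v k) + 1 := by
        linarith [(abs_lt.mp (abs_dist_dyadicCell_apply_sub_lt_one i u v k)).2]
    _ ≤ 2 ^ i * dist u v + 1 := by
        gcongr
        exact dist_le_pi_dist u v k

theorem mul_dist_lt_dist_dyadicCell_add_one (i : ℕ) (u v : ι → ℝ) :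
    2 ^ i * dist u v < dist (dyadicCell i u) (dyadicCell i v) + 1 := by
  rw [← lt_div_iff₀' (by positivity), dist_pi_lt_iff (by positivity)]
  intro k
  rw [lt_div_iff₀' (by positivity)]
  linarith [(abs_lt.mp (abs_dist_dyadicCell_apply_sub_lt_one i u v k)).1,
    dist_le_pi_dist (dyadicCell i u) (dyadicCell i v) k]

theorem dist_dyadicCell_succ_two_smul_le (i : ℕ) (v : ι → ℝ) {e : ι → ℤ} {r : ℕ}
    (h : dist (dyadicCell i v) e ≤ r) :
    dist (dyadicCell (i + 1) v) (2 • e) ≤ (2 * r + 1 : ℕ) := by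
  refine (dist_pi_le_iff (by positivity)).mpr fun k => ?_
  have hk := (dist_le_pi_dist _ _ k).trans h
  rw [dyadicCell_eq_succ_ediv_two, Int.dist_eq] at hk
  have hk' : |dyadicCell (i + 1) v k / 2 - e k| ≤ r := by exact_mod_cast hk
  have hgoal : |dyadicCell (i + 1) v k - 2 * e k| ≤ (2 * r + 1 : ℕ) := by
    rw [abs_le] at hk' ⊢
    constructor <;> lia
  have hcast : (|dyadicCell (i + 1) v k - 2 * e k| : ℝ) ≤ (2 * r + 1 : ℕ) := mod_cast hgoal
  simpa [Int.dist_eq] using hcast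

theorem card_nearChildren_dyadicTree_le (y : α → ι → ℝ) (P : Finset α) (r i : ℕ) (b : ι → ℤ) :
    #(nearChildren (dyadicTree y) P r i b) ≤ (4 * r + 3) ^ Fintype.card ι := by
  have h : #(nearChildren (dyadicTree y) P r i b) ≤ (2 * (2 * r + 1) + 1) ^ Fintype.card ι := by
    refine card_le_of_forall_dist_le (a := 2 • b) fun e he => ?_
    obtain ⟨x, -, hx, rfl⟩ := mem_nearChildren.mp he
    exact dist_dyadicCell_succ_two_smul_le i (y x) hx
  convert h using 2
  ring

variable {y : α → ι → ℝ} {P : Finset α}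

theorem isSeparatingTree_dyadicTree (T : ℝ) (hy : Set.InjOn y P)
    (hunit : ∀ p ∈ P, ∀ k, y p k ∈ Set.Ico (0 : ℝ) 1) : IsSeparatingTree T (dyadicTree y) P where
  isNested := isNested_dyadicTree y
  root_eq p hp q hq :=
    (dyadicCell_zero_eq_zero (hunit p hp)).trans (dyadicCell_zero_eq_zero (hunit q hq)).symm
  exists_lt_dist p hp q hq hne := by
    have hdist : 0 < dist (y p) (y q) := dist_pos.mpr fun h => hne (hy hp hq h)
    obtain ⟨i, hi⟩ := pow_unbounded_of_one_lt ((T + 1) / dist (y p) (y q)) one_lt_two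
    rw [div_lt_iff₀ hdist] at hi
    have hcell := mul_dist_lt_dist_dyadicCell_add_one i (y p) (y q)
    exact ⟨i, lt_of_add_lt_add_right (hi.trans hcell)⟩

/-- The number of points near `p` at least doubles when the scale grows from level `i + 4` to level
`i`. The radius `4T / 2ⁱ` covers every point separated from `p` at level `i`. -/
def IsDoublingAt (T : ℝ) (y : α → ι → ℝ) (P : Finset α) (i : ℕ) (p : α) : Prop :=
  2 * ballCard y P (4 * T / 2 ^ (i + 4)) (y p) ≤ ballCard y P (4 * T / 2 ^ i) (y p)

theorem IsSeparatingTree.isDoublingAt_sepLevel {T : ℝ} (h : IsSeparatingTree T (dyadicTree y) P)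
    (hT : 2 ≤ T) {p q : α} (hp : p ∈ P) (hq : q ∈ P) (hne : p ≠ q) :
    IsDoublingAt T y P (sepLevel T (dyadicTree y) p q) p ∨
      IsDoublingAt T y P (sepLevel T (dyadicTree y) p q) q := by
  obtain ⟨i, hi⟩ := Nat.exists_eq_succ_of_ne_zero (h.sepLevel_ne_zero (by linarith) hp hq hne)
  set l := sepLevel T (dyadicTree y) p q
  have hlower : T - 1 < 2 ^ l * dist (y p) (y q) := by
    have hcell : T < dist (dyadicCell l (y p)) (dyadicCell l (y q)) :=
      lt_dist_sepLevel (h.exists_lt_dist p hp q hq hne)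
    linarith [dist_dyadicCell_lt l (y p) (y q)]
  have hupper : 2 ^ l * dist (y p) (y q) < 2 * T + 2 := by
    have hcell : dist (dyadicCell i (y p)) (dyadicCell i (y q)) ≤ T :=
      dist_le_of_lt_sepLevel (c := dyadicTree y) (i.lt_succ_self.trans_eq hi.symm)
    rw [hi, Nat.succ_eq_add_one, pow_succ]
    linarith [mul_dist_lt_dist_dyadicCell_add_one i (y p) (y q)]
  have hscale : 4 * T / 2 ^ (l + 4) = T / 4 / 2 ^ l := by
    rw [pow_add]
    field_simp
    norm_num
  refine two_mul_ballCard_le_or ?_ ?_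
  · rw [hscale, mul_div_assoc', div_le_iff₀' (by positivity)]
    linarith
  · rw [hscale, ← le_sub_iff_add_le', ← sub_div, le_div_iff₀' (by positivity)]
    linarith

theorem card_le_of_forall_isDoublingAt {T : ℝ} (hT : 0 < T) {p : α} (hp : p ∈ P) {S : Finset ℕ}
    (hS : ∀ i ∈ S, IsDoublingAt T y P i p) : #S ≤ 4 * Nat.log 2 #P := by
  have hanti : Antitone fun i : ℕ => ballCard y P (4 * T / 2 ^ i) (y p) := by
    intro i j hij
    refine ballCard_mono ?_
    gcongr
    exact one_le_two
  have hpos : ∀ i : ℕ, ballCard y P (4 * T / 2 ^ i) (y p) ≠ 0 :=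
    fun i => ballCard_ne_zero hp (by positivity)
  calc #S ≤ 4 * Nat.log 2 (ballCard y P (4 * T / 2 ^ 0) (y p)) :=
        card_le_mul_log_of_two_mul_le hanti hpos hS
    _ ≤ 4 * Nat.log 2 #P := Nat.mul_le_mul_left 4 (Nat.log_mono_right (ballCard_le_card _ _))

end DyadicCell

section WSPD

/-- The pairs `(A i, B i)` form an `s`-well-separated pair decomposition of `P`. -/
structure IsWSPD {κ X : Type*} [PseudoMetricSpace X] (s : ℝ) (P : Finset X) (A B : κ → Finset X) :
    Prop where
  sides : ∀ i, (A i).Nonempty ∧ (B i).Nonempty ∧ A i ⊆ P ∧ B i ⊆ P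
  separated : ∀ i, ∀ a ∈ A i, ∀ b ∈ B i,
    s * max (Metric.diam (A i : Set X)) (Metric.diam (B i : Set X)) ≤ dist a b
  existsUnique_mem : ∀ p ∈ P, ∀ q ∈ P, p ≠ q → ∃! i, (p ∈ A i ∧ q ∈ B i) ∨ (q ∈ A i ∧ p ∈ B i)

theorem IsWSPD.comp_equiv {κ κ' X : Type*} [PseudoMetricSpace X] {s : ℝ} {P : Finset X}
    {A B : κ → Finset X} (h : IsWSPD s P A B) (e : κ' ≃ κ) : IsWSPD s P (A ∘ e) (B ∘ e) where
  sides i := h.sides (e i)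
  separated i := h.separated (e i)
  existsUnique_mem p hp q hq hne :=
    (e.existsUnique_congr_right).mpr (h.existsUnique_mem p hp q hq hne)

variable {ι X : Type*} [Fintype ι]

theorem diam_block_dyadicTree_le [PseudoMetricSpace X] {y : X → ι → ℝ} {b : ℝ≥0}
    (hb : AntilipschitzWith b y) (P : Finset X) (i : ℕ) (e : ι → ℤ) :
    Metric.diam (block (dyadicTree y) P i e : Set X) ≤ b / 2 ^ i := by
  refine Metric.diam_le_of_forall_dist_le (by positivity) fun x hx z hz => ?_
  have hcell : dyadicCell i (y x) = dyadicCell i (y z) :=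
    (mem_block.mp hx).2.trans (mem_block.mp hz).2.symm
  have hdist := mul_dist_lt_dist_dyadicCell_add_one i (y x) (y z)
  rw [hcell, dist_self, zero_add] at hdist
  calc dist x z ≤ b * dist (y x) (y z) := hb.le_mul_dist x z
    _ ≤ b * (1 / 2 ^ i) := by
        gcongr
        rw [le_div_iff₀' (by positivity)]
        exact hdist.le
    _ = b / 2 ^ i := mul_one_div _ _

variable [MetricSpace X] {s T : ℝ} {y : X → ι → ℝ} {a b : ℝ≥0} {P : Finset X}

theorem isWSPD_block_dyadicTree (ha : LipschitzWith a y) (hb : AntilipschitzWith b y) (hs : 0 ≤ s)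
    (hT : s * (a * b) ≤ T - 1) (hunit : ∀ p ∈ P, ∀ k, y p k ∈ Set.Ico (0 : ℝ) 1) :
    IsWSPD s P
      (fun t : orientedSepPairs T (dyadicTree y) P => block (dyadicTree y) P t.1.1 t.1.2.1)
      (fun t : orientedSepPairs T (dyadicTree y) P => block (dyadicTree y) P t.1.1 t.1.2.2) := by
  have htree : IsSeparatingTree T (dyadicTree y) P :=
    isSeparatingTree_dyadicTree T hb.injective.injOn hunit
  have hT₀ : 0 ≤ T := by linarith [show 0 ≤ s * (a * b) by positivity]
  refine ⟨?_, ?_, fun p hp q hq => htree.existsUnique_mem_orientedSepPairs hT₀ hp hq⟩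
  · rintro ⟨t, ht⟩
    obtain ⟨p, hp, q, hq, -, rfl⟩ := mem_sepPairs.mp (mem_orientedSepPairs.mp ht).1
    exact ⟨⟨p, mem_block.mpr ⟨hp, rfl⟩⟩, ⟨q, mem_block.mpr ⟨hq, rfl⟩⟩,
      fun x hx => (mem_block.mp hx).1, fun x hx => (mem_block.mp hx).1⟩
  · rintro ⟨⟨i, e, e'⟩, ht⟩ p hp q hq
    have hcells := htree.lt_dist_of_mem_sepPairs (mem_orientedSepPairs.mp ht).1
    rw [← (mem_block.mp hp).2, ← (mem_block.mp hq).2] at hcells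
    have hdist : a * (s * (b / 2 ^ i)) < a * dist p q :=
      calc a * (s * (b / 2 ^ i)) = s * (a * b) / 2 ^ i := by ring
        _ ≤ (T - 1) / 2 ^ i := by gcongr
        _ < dist (y p) (y q) := by
            rw [div_lt_iff₀' (by positivity), sub_lt_iff_lt_add]
            exact hcells.trans (dist_dyadicCell_lt i (y p) (y q))
        _ ≤ a * dist p q := ha.dist_le_mul p q
    calc s * max _ _ ≤ s * (b / 2 ^ i) := by
          gcongr
          exact max_le (diam_block_dyadicTree_le hb P i e) (diam_block_dyadicTree_le hb P i e')
      _ ≤ dist p q := (lt_of_mul_lt_mul_left hdist a.2).le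

theorem exists_isWSPD_of_lipschitzWith (ha : LipschitzWith a y) (hb : AntilipschitzWith b y)
    (hs : 0 ≤ s) {T : ℕ} (hT₂ : 2 ≤ T) (hT : s * (a * b) ≤ T - 1)
    (hunit : ∀ p ∈ P, ∀ k, y p k ∈ Set.Ico (0 : ℝ) 1) :
    ∃ (m : ℕ) (A B : Fin m → Finset X), IsWSPD s P A B ∧
      m ≤ 2 * (3 ^ Fintype.card ι * (4 * T + 3) ^ Fintype.card ι * #P) ∧
      ∑ i, min #(A i) #(B i) ≤
        2 * (#P * ((4 * T + 3) ^ Fintype.card ι * (4 * Nat.log 2 #P))) := by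
  have htree : IsSeparatingTree T (dyadicTree y) P :=
    isSeparatingTree_dyadicTree T hb.injective.injOn hunit
  have hT₂' : (2 : ℝ) ≤ T := mod_cast hT₂
  have hchildren : ∀ i e, #(nearChildren (dyadicTree y) P 0 i e) ≤ 3 ^ Fintype.card ι := by
    simpa using card_nearChildren_dyadicTree_le y P 0
  have hnear := card_nearChildren_dyadicTree_le y P T
  have hsubset : orientedSepPairs T (dyadicTree y) P ⊆ sepPairs T (dyadicTree y) P :=
    fun t ht => (mem_orientedSepPairs.mp ht).1
  set e := (orientedSepPairs T (dyadicTree y) P).equivFin.symm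
  set size : ℕ × (ι → ℤ) × (ι → ℤ) → ℕ := fun t =>
    min #(block (dyadicTree y) P t.1 t.2.1) #(block (dyadicTree y) P t.1 t.2.2)
  refine ⟨_, _, _, (isWSPD_block_dyadicTree ha hb hs hT hunit).comp_equiv e,
    (card_le_card hsubset).trans (htree.card_sepPairs_le T.cast_nonneg hchildren hnear), ?_⟩
  calc ∑ i, size (e i) = ∑ t : orientedSepPairs T (dyadicTree y) P, size t :=
        e.sum_comp fun t => size t
    _ = ∑ t ∈ orientedSepPairs T (dyadicTree y) P, size t := sum_coe_sort _ size
    _ ≤ ∑ t ∈ sepPairs T (dyadicTree y) P, size t := sum_le_sum_of_subset hsubset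
    _ ≤ _ := htree.sum_min_card_block_le T.cast_nonneg
      (fun p hp q hq => htree.isDoublingAt_sepLevel hT₂' hp hq)
      (fun p hp S => card_le_of_forall_isDoublingAt (by linarith) hp) hnear

theorem exists_affine_mem_Ico (P : Finset (ι → ℝ)) :
    ∃ (R : ℝ≥0) (f : (ι → ℝ) → ι → ℝ), R ≠ 0 ∧ LipschitzWith R⁻¹ f ∧ AntilipschitzWith R f ∧
      ∀ x ∈ P, ∀ k, f x k ∈ Set.Ico (0 : ℝ) 1 := by
  obtain ⟨M, hM, hPM⟩ := P.finite_toSet.isBounded.exists_pos_norm_le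
  lift M to ℝ≥0 using hM.le
  have hM₀ : M ≠ 0 := by exact_mod_cast hM.ne'
  set f : (ι → ℝ) → ι → ℝ := fun x => (4 * M : ℝ)⁻¹ • x + fun _ => 1 / 2
  have hf : ∀ u v, dist (f u) (f v) = (4 * M : ℝ)⁻¹ * dist u v := fun u v => by
    simp [f, dist_smul₀]
  refine ⟨4 * M, f, by positivity, .of_dist_le_mul fun u v => by simp [hf],
    .of_le_mul_dist fun u v => ?_, fun x hx k => ?_⟩
  · rw [hf, NNReal.coe_mul, NNReal.coe_ofNat, mul_inv_cancel_left₀ (by positivity)]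
  · have hk : |x k| ≤ M := (norm_le_pi_norm x k).trans (hPM x hx)
    have hfk : f x k = x k / (4 * M) + 1 / 2 := by simp [f, div_eq_inv_mul]
    rw [hfk, Set.mem_Ico, ← sub_le_iff_le_add, ← lt_sub_iff_add_lt, le_div_iff₀ (by positivity),
      div_lt_iff₀ (by positivity)]
    rw [abs_le] at hk
    constructor <;> linarith

theorem exists_isWSPD_euclideanSpace (P : Finset (EuclideanSpace ℝ ι)) {s : ℝ} (hs : 0 ≤ s) {T : ℕ}
    (hT₂ : 2 ≤ T) (hT : s * √(Fintype.card ι) ≤ T - 1) :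
    ∃ (m : ℕ) (A B : Fin m → Finset (EuclideanSpace ℝ ι)), IsWSPD s P A B ∧
      m ≤ 2 * (3 ^ Fintype.card ι * (4 * T + 3) ^ Fintype.card ι * #P) ∧
      ∑ i, min #(A i) #(B i) ≤
        2 * (#P * ((4 * T + 3) ^ Fintype.card ι * (4 * Nat.log 2 #P))) := by
  classical
  obtain ⟨R, f, hR, hlip, hanti, hunit⟩ := exists_affine_mem_Ico (P.image (WithLp.ofLp (p := 2)))
  refine exists_isWSPD_of_lipschitzWith (hlip.comp (PiLp.lipschitzWith_ofLp 2 _))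
    (hanti.comp (PiLp.antilipschitzWith_ofLp 2 _)) hs hT₂ ?_
    fun p hp => hunit _ (mem_image_of_mem _ hp)
  convert hT using 2
  rw [Real.sqrt_eq_rpow]
  push_cast
  field_simp
  simp

end WSPD

theorem natLog_two_le_two_mul_log (n : ℕ) : (Nat.log 2 n : ℝ) ≤ 2 * Real.log n := by
  have hlog : 1 / 2 ≤ Real.log 2 := by linarith [Real.log_two_gt_d9]
  calc (Nat.log 2 n : ℝ) ≤ Real.log n / Real.log 2 := Real.natLog_le_logb n 2
    _ ≤ Real.log n / (1 / 2) :=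
        div_le_div_of_nonneg_left (Real.log_natCast_nonneg n) one_half_pos hlog
    _ = 2 * Real.log n := by ring

theorem exists_nat_mul_le_sub_one {r s : ℝ} (hr : 0 < r) (hs : 1 ≤ s) :
    ∃ T : ℕ, 2 ≤ T ∧ s * r ≤ T - 1 ∧ (4 * T + 3 : ℝ) ≤ (4 * r + 11) * s := by
  have hsr : 0 < s * r := mul_pos (by linarith) hr
  refine ⟨⌈s * r⌉₊ + 1, Nat.succ_le_succ (Nat.ceil_pos.mpr hsr), ?_, ?_⟩
  · simpa using Nat.le_ceil (s * r)
  · push_cast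
    linarith [Nat.ceil_lt_add_one hsr.le]

end WellSeparated

/-- Callahan: for every `d ≥ 1` there is a constant `C > 0` such that every `n`-point
set `P ⊆ ℝ^d` (`n ≥ 2`) admits an `s`-well-separated pair decomposition with at most
`C·s^d·n` pairs which moreover satisfies `Σᵢ min(|Aᵢ|,|Bᵢ|) ≤ C·s^d·n·log n`. -/
theorem wspd_with_small_min_sum_exists :
    ∀ d : ℕ, 1 ≤ d → ∃ C : ℝ, 0 < C ∧
      ∀ s : ℝ, 1 ≤ s →
      ∀ P : Finset (EuclideanSpace ℝ (Fin d)), 2 ≤ P.card →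
      ∃ (m : ℕ) (A B : Fin m → Finset (EuclideanSpace ℝ (Fin d))),
        (m : ℝ) ≤ C * s ^ d * P.card ∧
        (∀ i, (A i).Nonempty ∧ (B i).Nonempty ∧ A i ⊆ P ∧ B i ⊆ P) ∧
        (∀ i, ∀ a ∈ A i, ∀ b ∈ B i,
          s * max (Metric.diam (A i : Set (EuclideanSpace ℝ (Fin d))))
                  (Metric.diam (B i : Set (EuclideanSpace ℝ (Fin d)))) ≤ dist a b) ∧
        (∀ p ∈ P, ∀ q ∈ P, p ≠ q →
          ∃! i, (p ∈ A i ∧ q ∈ B i) ∨ (q ∈ A i ∧ p ∈ B i)) ∧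
        (∑ i, (min (A i).card (B i).card : ℝ)) ≤
          C * s ^ d * P.card * Real.log P.card := by
  intro d hd
  set W := 4 * √d + 11
  refine ⟨16 * 3 ^ d * W ^ d, by positivity, fun s hs P _ => ?_⟩
  obtain ⟨T, hT₂, hT, hTW⟩ := WellSeparated.exists_nat_mul_le_sub_one
    (Real.sqrt_pos.mpr (Nat.cast_pos.mpr hd : (0 : ℝ) < d)) hs
  obtain ⟨m, A, B, hAB, hm, hmin⟩ := WellSeparated.exists_isWSPD_euclideanSpace P
    (zero_le_one.trans hs) hT₂ (by rwa [Fintype.card_fin])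
  rw [Fintype.card_fin] at hm hmin
  have hpow : (4 * T + 3 : ℝ) ^ d ≤ W ^ d * s ^ d :=
    (pow_le_pow_left₀ (by positivity) hTW d).trans_eq (mul_pow W s d)
  refine ⟨m, A, B, ?_, hAB.sides, hAB.separated, hAB.existsUnique_mem, ?_⟩
  · calc (m : ℝ) ≤ 2 * (3 ^ d * (4 * T + 3) ^ d * P.card) := mod_cast hm
      _ ≤ 16 * (3 ^ d * (W ^ d * s ^ d) * P.card) := by gcongr; norm_num
      _ = 16 * 3 ^ d * W ^ d * s ^ d * P.card := by ring
  · calc (∑ i, min (A i).card (B i).card : ℝ)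
        ≤ 2 * (P.card * ((4 * T + 3) ^ d * (4 * Nat.log 2 P.card))) := mod_cast hmin
      _ ≤ 2 * (P.card * (W ^ d * s ^ d * (4 * (2 * Real.log P.card)))) := by
          gcongr
          exact WellSeparated.natLog_two_le_two_mul_log _
      _ = 16 * 1 * W ^ d * s ^ d * P.card * Real.log P.card := by ring
      _ ≤ 16 * 3 ^ d * W ^ d * s ^ d * P.card * Real.log P.card := by
          gcongr
          exact one_le_pow₀ (by norm_num)
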